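/- Let trans : σ → L → σ → Prop be a deterministic labeled transition system and let s, t be states. Then PairClosure s t, the least relation containing (s, t) and closed under simultaneous labeled steps, is contained in every simulation S with S s t. Consequently, in a deterministic LTS, if there exists any simulation containing (s, t), then for every pair (u, v) in PairClosure s t and every transition u →α u' there exists v' with v →α v' (i.e., the paper's similarity checker succeeds). -/

import Mathlib

/-- The LTS `trans` is deterministic: each state and label has at most one successor. -/
def Deterministic {σ L : Type*} (trans : σ → L → σ → Prop) : Prop :=
  ∀ u α u' u'', trans u α u' → trans u α u'' → u' = u''

/-- `R` is a simulation for the LTS `trans`. -/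
def IsSimulation {σ L : Type*} (trans : σ → L → σ → Prop) (R : σ → σ → Prop) : Prop :=
  ∀ u v, R u v → ∀ α u', trans u α u' → ∃ v', trans v α v' ∧ R u' v'

/-- `PairClosure trans s t` is the least relation containing `(s, t)` and closed under
simultaneous labeled steps of the LTS `trans`. -/
inductive PairClosure {σ L : Type*} (trans : σ → L → σ → Prop) (s t : σ) : σ → σ → Prop
  | base : PairClosure trans s t s t
  | step {u v u' v' : σ} {α : L} : PairClosure trans s t u v →
      trans u α u' → trans v α v' → PairClosure trans s t u' v'

/-- In a deterministic LTS, `PairClosure trans s t` is contained in every simulation `S`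
with `S s t`; consequently, if some simulation relates `s` to `t`, then at every pair of
`PairClosure trans s t` every move of the left state is matched by a move of the right
state (the similarity checker succeeds). -/
theorem pairClosure_least {σ L : Type*} (trans : σ → L → σ → Prop)
    (hdet : Deterministic trans) (s t : σ) :
    (∀ S : σ → σ → Prop, IsSimulation trans S → S s t →
      ∀ u v, PairClosure trans s t u v → S u v) ∧
    ((∃ S : σ → σ → Prop, IsSimulation trans S ∧ S s t) →
      ∀ u v, PairClosure trans s t u v →
        ∀ α u', trans u α u' → ∃ v', trans v α v') := by
  have key : ∀ S : σ → σ → Prop, IsSimulation trans S → S s t →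
      ∀ u v, PairClosure trans s t u v → S u v := by
    intro S hS hst u v h
    induction h with
    | base => exact hst
    | step _ hu hv ih =>
      obtain ⟨w, hw, hSw⟩ := hS _ _ ih _ _ hu
      rw [hdet _ _ _ _ hv hw]
      exact hSw
  refine ⟨key, ?_⟩
  rintro ⟨S, hS, hst⟩ u v h α u' hu
  obtain ⟨w, hw, _⟩ := hS u v (key S hS hst u v h) α u' hu
  exact ⟨w, hw⟩
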